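/- (Shoda) Let V be a finite-dimensional vector space over the field F = GF(2) (the field with two elements) and let f : V → V be a nilpotent linear operator. Then the following are equivalent: (1) there exists a characteristic subspace of V for f that is not hyperinvariant for f; (2) there exist positive integers r and s with s > r + 1 such that the Jordan form of f contains exactly one Jordan block of size s and exactly one Jordan block of size r, i.e., 2·dim ker(f^s) − dim ker(f^{s−1}) − dim ker(f^{s+1}) = 1 and 2·dim ker(f^r) − dim ker(f^{r−1}) − dim ker(f^{r+1}) = 1. -/

import Mathlib

/-- A subspace `Y` is hyperinvariant for `f` if `g Y ⊆ Y` for every endomorphism `g`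
commuting with `f`. -/
def HyperinvariantSubspace {F V : Type*} [Field F] [AddCommGroup V] [Module F V]
    (f : Module.End F V) (Y : Submodule F V) : Prop :=
  ∀ g : Module.End F V, Commute g f → ∀ x ∈ Y, g x ∈ Y

/-- A subspace `Y` is characteristic for `f` if it is `f`-invariant and `g Y ⊆ Y` for every
invertible endomorphism `g` commuting with `f`. -/
def CharacteristicSubspace {F V : Type*} [Field F] [AddCommGroup V] [Module F V]
    (f : Module.End F V) (Y : Submodule F V) : Prop :=
  (∀ x ∈ Y, f x ∈ Y) ∧
    ∀ g : Module.End F V, IsUnit g → Commute g f → ∀ x ∈ Y, g x ∈ Y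

/-!
Regard `V` as the `F[X]`-module on which `X` acts as `f`: a direct sum of blocks `F[X] ⧸ (X ^ tᵢ)`,
whose endomorphisms are the operators commuting with `f`. The shear `1 + g` along a map `g` between
two distinct blocks is an automorphism, so a characteristic submodule `N` fails to be fully
invariant only if some `y ∈ N` has a component `yᵢ ∉ N`. When `F` has an element `c ≠ 0, 1`, scaling
one block by `c` shows that `(c - 1) yᵢ ∈ N`, so this forces `F = 𝔽₂`. A component outside `N` must
belong to a block whose size occurs only once, and there are at least two such components. If
exactly two were outside `N`, with block sizes differing by one, then since one of their `X`-adic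
valuations dominates the other, a shear between the two blocks would put one of them into `N`. Hence
two of the sizes differ by at least two.

Conversely, if there is exactly one block of size `n + 1`, then the Ulm–Kaplansky factor
`V[X ^ (n + 1)] ⧸ (V[X ^ n] + X V[X ^ (n + 2)])` is one-dimensional, and over `𝔽₂` every
automorphism acts trivially on it. Suppose there are unique blocks of sizes `m + 1` and `n + 1` with
`m + 1 < n`, generated by `uᵢ` and `uⱼ`. Modulo `S = X ^ (m + 1) (V[X ^ n] + X V[X ^ (n + 2)])`, the
element `X ^ m uᵢ + X ^ (m + 1) uⱼ` is then fixed by all automorphisms. Together with `S` it spans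
a characteristic submodule that does not contain its component `X ^ m uᵢ`.
-/

open Module Polynomial
open scoped Pointwise

section CommRing

variable {R : Type*} [CommRing R]

/-- A submodule is characteristic if every automorphism of the ambient module maps it into
itself. -/
def IsCharacteristicSubmodule {M : Type*} [AddCommGroup M] [Module R M]
    (N : Submodule R M) : Prop :=
  ∀ g : End R M, IsUnit g → N ≤ N.comap g

theorem exists_forall_apply_eq_smul {I : Ideal R} (h : End R (R ⧸ I)) :
    ∃ b : R, ∀ x, h x = b • x := by
  obtain ⟨b, hb⟩ := Ideal.Quotient.mk_surjective (h 1)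
  refine ⟨b, fun x ↦ ?_⟩
  obtain ⟨a, rfl⟩ := Ideal.Quotient.mk_surjective x
  rw [← mul_one (Ideal.Quotient.mk I a)]
  change h (a • 1) = b • a • 1
  rw [map_smul, ← hb, smul_comm]
  exact congrArg (a • ·) (mul_one _).symm

theorem exists_single_notMem {ι : Type*} [DecidableEq ι] [Finite ι] {M : ι → Type*}
    [∀ i, AddCommGroup (M i)] [∀ i, Module R (M i)] {N : Submodule R (∀ i, M i)} {y : ∀ i, M i}
    (hy : y ∈ N) {s : Finset ι} (hs : ∑ i ∈ s, Pi.single i (y i) ∉ N) :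
    ∃ j ∉ s, Pi.single j (y j) ∉ N := by
  have := Fintype.ofFinite ι
  contrapose! hs
  have hsum := Finset.sum_add_sum_compl s fun i ↦ (Pi.single i (y i) : ∀ i, M i)
  rw [Finset.univ_sum_single] at hsum
  refine (N.add_mem_iff_left (N.sum_mem fun j hj ↦ hs j (Finset.mem_compl.1 hj))).1 ?_
  rwa [hsum]

section Invariance

variable {M M' : Type*} [AddCommGroup M] [Module R M] [AddCommGroup M'] [Module R M']
  {N S : Submodule R M}

theorem isCharacteristicSubmodule_of_isFullyInvariant (hN : N.IsFullyInvariant) :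
    IsCharacteristicSubmodule N :=
  fun g _ ↦ hN g

theorem isFullyInvariant_smul (hN : N.IsFullyInvariant) (a : R) : (a • N).IsFullyInvariant := by
  rintro g _ ⟨x, hx, rfl⟩
  exact ⟨g x, hN g hx, (map_smul g a x).symm⟩

theorem isFullyInvariant_map_equiv_iff (e : M ≃ₗ[R] M') :
    (N.map (e : M →ₗ[R] M')).IsFullyInvariant ↔ N.IsFullyInvariant := by
  refine (e.conjRingEquiv.toEquiv.forall_congr fun {g} ↦ ?_).symm
  simp only [SetLike.le_def, Submodule.mem_comap, Submodule.mem_map_equiv]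
  refine (e.symm.surjective.forall).trans ?_
  simp

theorem isCharacteristicSubmodule_map_equiv_iff (e : M ≃ₗ[R] M') :
    IsCharacteristicSubmodule (N.map (e : M →ₗ[R] M')) ↔ IsCharacteristicSubmodule N := by
  refine (e.conjRingEquiv.toEquiv.forall_congr fun {g} ↦ ?_).symm
  simp only [SetLike.le_def, Submodule.mem_comap, Submodule.mem_map_equiv]
  refine imp_congr (by simp) ((e.symm.surjective.forall).trans ?_)
  simp

theorem exists_isCharacteristicSubmodule_congr (e : M ≃ₗ[R] M') :
    (∃ N : Submodule R M, IsCharacteristicSubmodule N ∧ ¬ N.IsFullyInvariant) ↔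
      ∃ N : Submodule R M', IsCharacteristicSubmodule N ∧ ¬ N.IsFullyInvariant := by
  rw [(Submodule.orderIsoMapComap e).surjective.exists]
  simp [isCharacteristicSubmodule_map_equiv_iff, isFullyInvariant_map_equiv_iff]

namespace IsCharacteristicSubmodule

theorem apply_mem_of_isNilpotent (hN : IsCharacteristicSubmodule N) {g : End R M}
    (hg : IsNilpotent g) {x : M} (hx : x ∈ N) : g x ∈ N :=
  (N.add_mem_iff_right hx).1 (hN (1 + g) hg.isUnit_one_add hx)

theorem sup_span_singleton (hS : IsCharacteristicSubmodule S) {z : M}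
    (hz : ∀ g : End R M, IsUnit g → g z - z ∈ S) :
    IsCharacteristicSubmodule (S ⊔ R ∙ z) := by
  intro g hg
  refine sup_le ((hS g hg).trans (Submodule.comap_mono le_sup_left)) ?_
  rw [Submodule.span_singleton_le_iff_mem, Submodule.mem_comap, ← sub_add_cancel (g z) z]
  exact Submodule.add_mem_sup (hz g hg) (Submodule.mem_span_singleton_self z)

theorem apply_sub_mem (hS : IsCharacteristicSubmodule S) (hN : IsCharacteristicSubmodule N)
    {u : M} (huN : u ∈ N) (huS : u ∉ S) (h : ∀ x ∈ N, x ∈ S ∨ x - u ∈ S)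
    {g : End R M} (hg : IsUnit g) : g u - u ∈ S := by
  refine (h (g u) (hN g hg huN)).resolve_left fun hgu ↦ huS ?_
  obtain ⟨g, rfl⟩ := hg
  have := hS _ g⁻¹.isUnit hgu
  rwa [Submodule.mem_comap, ← End.mul_apply, Units.inv_mul] at this

section Pi

variable {ι : Type*} [DecidableEq ι] {M : ι → Type*} [∀ i, AddCommGroup (M i)]
  [∀ i, Module R (M i)] {N : Submodule R (∀ i, M i)} {y : ∀ i, M i}

theorem single_apply_mem (hN : IsCharacteristicSubmodule N) {i j : ι} (hij : i ≠ j)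
    (h : M i →ₗ[R] M j) (hy : y ∈ N) : Pi.single j (h (y i)) ∈ N := by
  let g : End R (∀ i, M i) := LinearMap.single R M j ∘ₗ h ∘ₗ LinearMap.proj i
  have hg : g ^ 2 = 0 := by
    refine LinearMap.ext fun x ↦ ?_
    simp [g, pow_two, hij]
  exact hN.apply_mem_of_isNilpotent ⟨2, hg⟩ hy

theorem single_sub_mem (hN : IsCharacteristicSubmodule N) {i : ι} (e : M i ≃ₗ[R] M i)
    (hy : y ∈ N) : Pi.single i (e (y i) - y i) ∈ N := by
  let g : (∀ i, M i) ≃ₗ[R] ∀ i, M i :=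
    LinearEquiv.piCongrRight (Function.update (fun k ↦ LinearEquiv.refl R (M k)) i e)
  have hg : g y - y = Pi.single i (e (y i) - y i) := by
    ext k
    obtain rfl | hk := eq_or_ne k i
    · simp [g]
    · simp [g, hk]
  rw [← hg]
  exact N.sub_mem (hN g ((End.isUnit_iff _).2 g.bijective) hy) hy

theorem isFullyInvariant_of_single_mem [Finite ι] {I : ι → Ideal R}
    {N : Submodule R (∀ i, R ⧸ I i)} (hN : IsCharacteristicSubmodule N)
    (h : ∀ y ∈ N, ∀ i, Pi.single i (y i) ∈ N) : N.IsFullyInvariant := by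
  have := Fintype.ofFinite ι
  intro g y hy
  rw [Submodule.mem_comap, ← Finset.univ_sum_single (g y)]
  refine N.sum_mem fun i _ ↦ ?_
  let g' : ∀ j, (R ⧸ I j) →ₗ[R] R ⧸ I i := fun j ↦
    LinearMap.proj i ∘ₗ g ∘ₗ LinearMap.single R (fun k ↦ R ⧸ I k) j
  have hg : g y i = ∑ j, g' j (y j) := by
    conv_lhs => rw [← Finset.univ_sum_single y, map_sum, Finset.sum_apply]
    rfl
  rw [hg, ← LinearMap.coe_single R, map_sum]
  refine N.sum_mem fun j _ ↦ ?_
  obtain rfl | hji := eq_or_ne j i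
  · obtain ⟨b, hb⟩ := exists_forall_apply_eq_smul (g' j)
    rw [hb, map_smul]
    exact N.smul_mem b (h y hy j)
  · exact hN.single_apply_mem hji (g' j) hy

end Pi

end IsCharacteristicSubmodule

end Invariance

/-- The direct sum of the cyclic modules `R ⧸ (p ^ t i)`. For `R = F[X]` and `p = X` it is the
Jordan normal form of a nilpotent operator whose Jordan blocks have the sizes `t i`. -/
abbrev PrimaryModule {ι : Type*} (p : R) (t : ι → ℕ) : Type _ :=
  ∀ i, R ⧸ Ideal.span {p ^ t i}

/-- The standard generator of the `j`-th cyclic summand of `PrimaryModule p t`. -/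
def PrimaryModule.generator {ι : Type*} [DecidableEq ι] (p : R) (t : ι → ℕ) (j : ι) :
    PrimaryModule p t :=
  Pi.single j 1

open PrimaryModule

section Cyclic

variable {p : R}

theorem mk_eq_zero_iff_dvd {a b : R} : Ideal.Quotient.mk (Ideal.span {a}) b = 0 ↔ a ∣ b := by
  rw [Ideal.Quotient.eq_zero_iff_mem, Ideal.mem_span_singleton]

theorem isCoprime_of_not_dvd (hp : (Ideal.span {p}).IsMaximal) {a : R} (ha : ¬ p ∣ a) :
    IsCoprime a p := by
  obtain ⟨b, i, hi, h⟩ := hp.exists_inv (mt Ideal.mem_span_singleton.1 ha)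
  obtain ⟨c, rfl⟩ := Ideal.mem_span_singleton'.1 hi
  exact ⟨b, c, h⟩

theorem exists_dvd_sub_mul (hp : (Ideal.span {p}).IsMaximal) (n : ℕ) (a b : R) :
    (∃ c, p ^ n ∣ a - c * b) ∨ ∃ c, p ^ n ∣ b - c * (p * a) := by
  induction n generalizing a b with
  | zero => simp
  | succ n ih =>
    by_cases hb : p ∣ b
    · obtain ⟨b, rfl⟩ := hb
      by_cases ha : p ∣ a
      · obtain ⟨a, rfl⟩ := ha
        exact (ih a b).imp (fun ⟨c, d, h⟩ ↦ ⟨c, d, by linear_combination p * h⟩)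
          fun ⟨c, d, h⟩ ↦ ⟨c, d, by linear_combination p * h⟩
      · obtain ⟨x, y, hxy⟩ := (isCoprime_of_not_dvd hp ha).pow_right (n := n)
        exact .inr ⟨b * x, b * y, by linear_combination (- p * b) * hxy⟩
    · obtain ⟨x, y, hxy⟩ := (isCoprime_of_not_dvd hp hb).pow_right (n := n + 1)
      exact .inl ⟨a * x, a * y, by linear_combination (- a) * hxy⟩

end Cyclic

theorem pos_of_single_notMem {ι : Type*} [DecidableEq ι] {p : R} {t : ι → ℕ}
    {N : Submodule R (PrimaryModule p t)} {y : PrimaryModule p t} {i : ι}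
    (h : Pi.single i (y i) ∉ N) : 0 < t i := by
  contrapose! h
  have : y i = 0 := by
    obtain ⟨a, ha⟩ := Ideal.Quotient.mk_surjective (y i)
    rw [← ha, mk_eq_zero_iff_dvd, Nat.le_zero.1 h, pow_zero]
    exact one_dvd a
  rw [this, Pi.single_zero]
  exact N.zero_mem

namespace IsCharacteristicSubmodule

variable {ι : Type*} [DecidableEq ι] {p : R} {t : ι → ℕ} {N : Submodule R (PrimaryModule p t)}
  {y : PrimaryModule p t} {i j k : ι}

theorem single_mk_mul_mem (hN : IsCharacteristicSubmodule N) (hij : i ≠ j) {a c : R}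
    (hc : p ^ t j ∣ c * p ^ t i) (hy : y ∈ N) (ha : Ideal.Quotient.mk _ a = y i) :
    Pi.single j (Ideal.Quotient.mk _ (c * a)) ∈ N := by
  let h : (R ⧸ Ideal.span {p ^ t i}) →ₗ[R] R ⧸ Ideal.span {p ^ t j} :=
    Submodule.mapQ _ _ (LinearMap.mulLeft R c) <| by
      rw [Ideal.span_singleton_le_iff_mem]
      exact Ideal.mem_span_singleton.2 hc
  have := hN.single_apply_mem hij h hy
  rwa [← ha] at this

theorem single_mem_of_eq (hN : IsCharacteristicSubmodule N) (hij : i ≠ j) (ht : t i = t j)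
    (hy : y ∈ N) : Pi.single i (y i) ∈ N := by
  obtain ⟨a, ha⟩ := Ideal.Quotient.mk_surjective (y i)
  have hj := hN.single_mk_mul_mem hij (c := 1) (by rw [ht, one_mul]) hy ha
  have hi := hN.single_mk_mul_mem hij.symm (c := 1) (by rw [ht, one_mul]) hj (a := a) (by simp)
  rwa [one_mul, ha] at hi

theorem single_mem_of_add_mem (hp : (Ideal.span {p}).IsMaximal) (hN : IsCharacteristicSubmodule N)
    (ht : t j = t i + 1) (hy : y ∈ N) (hadd : Pi.single i (y i) + Pi.single j (y j) ∈ N) :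
    Pi.single i (y i) ∈ N := by
  have hij : i ≠ j := by rintro rfl; omega
  obtain ⟨a, ha⟩ := Ideal.Quotient.mk_surjective (y i)
  obtain ⟨b, hb⟩ := Ideal.Quotient.mk_surjective (y j)
  rcases exists_dvd_sub_mul hp (t j) a b with ⟨c, hc⟩ | ⟨c, hc⟩
  · have hbi : Pi.single i (Ideal.Quotient.mk _ (1 * b)) ∈ N :=
      hN.single_mk_mul_mem hij.symm (by rw [one_mul, ht, pow_succ]; exact dvd_mul_right _ _) hy hb
    have hyi : y i = c • Ideal.Quotient.mk _ (1 * b) := by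
      rw [← ha, ← sub_eq_zero, one_mul]
      exact mk_eq_zero_iff_dvd.2 ((pow_dvd_pow p (by omega)).trans hc)
    rw [hyi, Pi.single_smul]
    exact N.smul_mem c hbi
  · have haj : Pi.single j (Ideal.Quotient.mk _ (p * a)) ∈ N :=
      hN.single_mk_mul_mem hij (by rw [ht, pow_succ']) hy ha
    have hyj : y j = c • Ideal.Quotient.mk _ (p * a) := by
      rw [← hb, ← sub_eq_zero]
      exact mk_eq_zero_iff_dvd.2 hc
    refine (N.add_mem_iff_left ?_).1 hadd
    rw [hyj, Pi.single_smul]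
    exact N.smul_mem c haj

theorem single_mem_of_not_dvd (hp : (Ideal.span {p}).IsMaximal) (hN : IsCharacteristicSubmodule N)
    {c : R} (hc : ¬ p ∣ c) (hc' : ¬ p ∣ c - 1) (hy : y ∈ N) : Pi.single i (y i) ∈ N := by
  have hunit {a : R} (ha : ¬ p ∣ a) :
      IsUnit (Ideal.Quotient.mk (Ideal.span {p ^ t i}) a) := by
    obtain ⟨x, z, h⟩ := (isCoprime_of_not_dvd hp ha).pow_right (n := t i)
    refine .of_mul_eq_one_right (Ideal.Quotient.mk _ x) ?_
    rw [← map_mul, ← map_one (Ideal.Quotient.mk _), ← sub_eq_zero, ← map_sub, mk_eq_zero_iff_dvd]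
    exact ⟨-z, by linear_combination h⟩
  have h := hN.single_sub_mem ((hunit hc).unit.mulLeftLinearEquiv R _) hy
  obtain ⟨d, hd⟩ := (hunit hc').exists_left_inv
  obtain ⟨d, rfl⟩ := Ideal.Quotient.mk_surjective d
  have hinv : d • ((hunit hc).unit.mulLeftLinearEquiv R _ (y i) - y i) = y i := by
    change Ideal.Quotient.mk _ d * (Ideal.Quotient.mk _ c * y i - y i) = y i
    rw [map_sub, map_one] at hd
    linear_combination y i * hd
  have hmem := N.smul_mem d h
  rwa [← Pi.single_smul, hinv] at hmem

theorem existsUnique_of_single_notMem (hN : IsCharacteristicSubmodule N) (hy : y ∈ N)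
    (h : Pi.single i (y i) ∉ N) : ∃! k, t k = t i :=
  ⟨i, rfl, fun _ hk ↦ by_contra fun hki ↦ h (hN.single_mem_of_eq (Ne.symm hki) hk.symm hy)⟩

theorem exists_gap_of_single_notMem [Finite ι] (hp : (Ideal.span {p}).IsMaximal)
    (hN : IsCharacteristicSubmodule N) (hy : y ∈ N) (hi : Pi.single i (y i) ∉ N) :
    ∃ j k, t j + 1 < t k ∧ Pi.single j (y j) ∉ N ∧ Pi.single k (y k) ∉ N := by
  have hne {j k} (hj : Pi.single j (y j) ∉ N) (hjk : j ≠ k) : t j ≠ t k :=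
    fun ht ↦ hj (hN.single_mem_of_eq hjk ht hy)
  obtain ⟨j, hji, hj⟩ := exists_single_notMem hy (s := {i}) (by simpa using hi)
  by_contra! hgap
  have hij := hne hi (k := j) (by grind)
  have hadd : Pi.single i (y i) + Pi.single j (y j) ∉ N := by
    intro h
    rcases (by grind : t j = t i + 1 ∨ t i = t j + 1) with ht | ht
    · exact hi (hN.single_mem_of_add_mem hp ht hy h)
    · exact hj (hN.single_mem_of_add_mem hp ht hy (by rwa [add_comm]))
  obtain ⟨k, hk, hk'⟩ := exists_single_notMem hy (s := {i, j})
    (by rwa [Finset.sum_pair (by grind)])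
  have hik := hne hi (k := k) (by grind)
  have hjk := hne hj (k := k) (by grind)
  grind

end IsCharacteristicSubmodule

section Ulm

variable {M M' : Type*} [AddCommGroup M] [Module R M] [AddCommGroup M'] [Module R M']
  {p : R} {m n : ℕ}

/-- The submodule `M[p ^ n] + p M[p ^ (n + 2)]` of `M[p ^ (n + 1)]`. The quotient is the
Ulm–Kaplansky factor of `M` at `n`: its dimension over `R ⧸ (p)` is the number of cyclic summands
`R ⧸ (p ^ (n + 1))` of `M`. -/
def ulmSubmodule (M : Type*) [AddCommGroup M] [Module R M] (p : R) (n : ℕ) : Submodule R M :=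
  Submodule.torsionBy R M (p ^ n) ⊔ p • Submodule.torsionBy R M (p ^ (n + 2))

theorem map_mem_torsionBy (g : M →ₗ[R] M') {a : R} {x : M} (hx : x ∈ Submodule.torsionBy R M a) :
    g x ∈ Submodule.torsionBy R M' a := by
  rw [Submodule.mem_torsionBy_iff, ← map_smul, (Submodule.mem_torsionBy_iff a x).1 hx, map_zero]

theorem map_mem_ulmSubmodule (g : M →ₗ[R] M') {x : M} (hx : x ∈ ulmSubmodule M p n) :
    g x ∈ ulmSubmodule M' p n := by
  obtain ⟨y, hy, _, ⟨z, hz, rfl⟩, rfl⟩ := Submodule.mem_sup.1 hx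
  rw [map_add]
  exact Submodule.add_mem_sup (map_mem_torsionBy g hy)
    ⟨g z, map_mem_torsionBy g hz, (map_smul g p z).symm⟩

theorem isFullyInvariant_torsionBy {a : R} : (Submodule.torsionBy R M a).IsFullyInvariant :=
  fun g _ ↦ map_mem_torsionBy g

theorem isFullyInvariant_ulmSubmodule : (ulmSubmodule M p n).IsFullyInvariant :=
  fun g _ ↦ map_mem_ulmSubmodule g

theorem torsionBy_le_ulmSubmodule (hmn : m ≤ n) :
    Submodule.torsionBy R M (p ^ m) ≤ ulmSubmodule M p n :=
  (Submodule.torsionBy_le_torsionBy_of_dvd _ _ (pow_dvd_pow p hmn)).trans le_sup_left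

theorem smul_mem_ulmSubmodule {x : M} (hx : x ∈ Submodule.torsionBy R M (p ^ (n + 1))) :
    p • x ∈ ulmSubmodule M p n :=
  Submodule.mem_sup_right <| Submodule.smul_mem_pointwise_smul _ _ _ <|
    Submodule.torsionBy_le_torsionBy_of_dvd _ _ (pow_dvd_pow p (by omega)) hx

theorem pow_smul_mem_of_mem_ulmSubmodule (hmn : m + 1 < n) {x : M} (hx : x ∈ ulmSubmodule M p m) :
    p ^ m • x ∈ p ^ (m + 1) • ulmSubmodule M p n := by
  obtain ⟨y, hy, _, ⟨z, hz, rfl⟩, rfl⟩ := Submodule.mem_sup.1 hx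
  refine ⟨z, torsionBy_le_ulmSubmodule hmn hz, ?_⟩
  rw [smul_add, (Submodule.mem_torsionBy_iff _ y).1 hy, zero_add]
  simp [pow_succ, mul_smul]

theorem mem_ulmSubmodule_of_ne [IsDomain R] (hp : p ≠ 0) {s : ℕ} (hs : s ≠ n + 1)
    {x : R ⧸ Ideal.span {p ^ s}} (hx : x ∈ Submodule.torsionBy R _ (p ^ (n + 1))) :
    x ∈ ulmSubmodule _ p n := by
  obtain ⟨a, rfl⟩ := Ideal.Quotient.mk_surjective x
  rcases Nat.lt_or_gt_of_ne hs with hlt | hgt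
  · refine torsionBy_le_ulmSubmodule le_rfl (mk_eq_zero_iff_dvd.2 ?_)
    exact (pow_dvd_pow p (by omega)).mul_right a
  · obtain ⟨l, rfl⟩ : ∃ l, s = (n + 1) + (l + 1) := ⟨s - n - 2, by omega⟩
    obtain ⟨b, rfl⟩ : p ^ (l + 1) ∣ a := by
      rw [← mul_dvd_mul_iff_left (pow_ne_zero (n + 1) hp), ← pow_add]
      exact mk_eq_zero_iff_dvd.1 hx
    refine Submodule.mem_sup_right ⟨Ideal.Quotient.mk _ (p ^ l * b), mk_eq_zero_iff_dvd.2 ?_, ?_⟩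
    · exact ⟨b, by simp only [smul_eq_mul]; ring⟩
    · exact congrArg (Ideal.Quotient.mk _) (by ring : p * (p ^ l * b) = p ^ (l + 1) * b)

theorem pow_smul_one_eq_zero_iff [IsDomain R] (hp : Prime p) {k : ℕ} :
    p ^ k • (1 : R ⧸ Ideal.span {p ^ n}) = 0 ↔ n ≤ k := by
  have h : p ^ k • (1 : R ⧸ Ideal.span {p ^ n}) = Ideal.Quotient.mk _ (p ^ k) := by
    rw [Algebra.smul_def, mul_one]; rfl
  rw [h, mk_eq_zero_iff_dvd, pow_dvd_pow_iff hp.ne_zero hp.not_isUnit]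

theorem one_notMem_ulmSubmodule [IsDomain R] (hp : Prime p) :
    (1 : R ⧸ Ideal.span {p ^ (n + 1)}) ∉ ulmSubmodule _ p n := by
  intro h
  obtain ⟨x, hx, _, ⟨y, -, rfl⟩, hxy⟩ := Submodule.mem_sup.1 h
  obtain ⟨b, rfl⟩ := Ideal.Quotient.mk_surjective y
  have hpb : p ^ n • p • Ideal.Quotient.mk (Ideal.span {p ^ (n + 1)}) b = 0 :=
    mk_eq_zero_iff_dvd.2 ⟨b, by simp only [smul_eq_mul]; ring⟩
  have h1 : p ^ n • (1 : R ⧸ Ideal.span {p ^ (n + 1)}) = 0 := by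
    rw [← hxy, smul_add, (Submodule.mem_torsionBy_iff _ x).1 hx, zero_add]
    exact hpb
  exact Nat.not_succ_le_self n ((pow_smul_one_eq_zero_iff hp).1 h1)

variable {ι : Type*} [DecidableEq ι] {t : ι → ℕ} {j : ι}

theorem smul_generator_apply_self (c : R) : (c • generator p t j) j = Ideal.Quotient.mk _ c := by
  rw [Pi.smul_apply, generator, Pi.single_eq_same, Algebra.smul_def, mul_one]
  rfl

theorem generator_apply_of_ne {k : ι} (hkj : k ≠ j) : generator p t j k = 0 :=
  Pi.single_eq_of_ne hkj _

theorem generator_mem_torsionBy (hj : t j = n) :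
    generator p t j ∈ Submodule.torsionBy R _ (p ^ n) := by
  subst hj
  have h : (1 : R ⧸ Ideal.span {p ^ t j}) ∈ Submodule.torsionBy R _ (p ^ t j) :=
    mk_eq_zero_iff_dvd.2 (dvd_mul_right _ _)
  exact map_mem_torsionBy (LinearMap.single R (fun k ↦ R ⧸ Ideal.span {p ^ t k}) j) h

theorem generator_notMem_ulmSubmodule [IsDomain R] (hp : Prime p) (hj : t j = n + 1) :
    generator p t j ∉ ulmSubmodule _ p n := by
  intro h
  have := map_mem_ulmSubmodule (LinearMap.proj j) h
  rw [LinearMap.proj_apply, generator, Pi.single_eq_same, hj] at this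
  exact one_notMem_ulmSubmodule hp this

theorem exists_sub_smul_generator_mem_ulmSubmodule [Finite ι] [IsDomain R] (hp : p ≠ 0)
    (hj : ∀ k, t k = n + 1 → k = j) {x : PrimaryModule p t}
    (hx : x ∈ Submodule.torsionBy R _ (p ^ (n + 1))) :
    ∃ c : R, x - c • generator p t j ∈ ulmSubmodule _ p n := by
  have := Fintype.ofFinite ι
  obtain ⟨c, hc⟩ := Ideal.Quotient.mk_surjective (x j)
  refine ⟨c, ?_⟩
  rw [← Finset.univ_sum_single (x - c • generator p t j)]
  refine Submodule.sum_mem _ fun k _ ↦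
    map_mem_ulmSubmodule (LinearMap.single R (fun k ↦ R ⧸ Ideal.span {p ^ t k}) k) ?_
  obtain rfl | hkj := eq_or_ne k j
  · rw [Pi.sub_apply, smul_generator_apply_self, ← hc, sub_self]
    exact Submodule.zero_mem _
  · rw [Pi.sub_apply, Pi.smul_apply, generator_apply_of_ne hkj, smul_zero, sub_zero]
    exact mem_ulmSubmodule_of_ne hp (mt (hj k) hkj) (map_mem_torsionBy (LinearMap.proj k) hx)

theorem mem_or_sub_generator_mem_ulmSubmodule [Finite ι] [IsDomain R] (hp : p ≠ 0)
    (hres : ∀ c : R, p ∣ c ∨ p ∣ c - 1) (hj : ∀ k, t k = n + 1 ↔ k = j) {x : PrimaryModule p t}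
    (hx : x ∈ Submodule.torsionBy R _ (p ^ (n + 1))) :
    x ∈ ulmSubmodule _ p n ∨ x - generator p t j ∈ ulmSubmodule _ p n := by
  obtain ⟨c, hc⟩ := exists_sub_smul_generator_mem_ulmSubmodule hp (fun k ↦ (hj k).1) hx
  have hpu : p • generator p t j ∈ ulmSubmodule _ p n :=
    smul_mem_ulmSubmodule (generator_mem_torsionBy ((hj j).2 rfl))
  refine (hres c).imp (fun ⟨d, hd⟩ ↦ ?_) fun ⟨d, hd⟩ ↦ ?_
  · convert add_mem hc (Submodule.smul_mem _ d hpu) using 1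
    rw [hd]; module
  · convert add_mem hc (Submodule.smul_mem _ d hpu) using 1
    rw [sub_eq_iff_eq_add.1 hd]; module

theorem apply_generator_sub_mem_ulmSubmodule [Finite ι] [IsDomain R] (hp : Prime p)
    (hres : ∀ c : R, p ∣ c ∨ p ∣ c - 1) (hj : ∀ k, t k = n + 1 ↔ k = j)
    {g : End R (PrimaryModule p t)} (hg : IsUnit g) :
    g (generator p t j) - generator p t j ∈ ulmSubmodule _ p n := by
  have htj := (hj j).2 rfl
  have hS := isCharacteristicSubmodule_of_isFullyInvariant
    (isFullyInvariant_ulmSubmodule (M := PrimaryModule p t) (p := p) (n := n))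
  have hT := isCharacteristicSubmodule_of_isFullyInvariant
    (isFullyInvariant_torsionBy (M := PrimaryModule p t) (a := p ^ (n + 1)))
  exact hS.apply_sub_mem hT (generator_mem_torsionBy htj) (generator_notMem_ulmSubmodule hp htj)
    (fun x hx ↦ mem_or_sub_generator_mem_ulmSubmodule hp.ne_zero hres hj hx) hg

theorem notMem_sup_span_add (hres : ∀ c : R, p ∣ c ∨ p ∣ c - 1) {S : Submodule R M} {x y : M}
    (hx : x ∉ S) (hy : y ∉ S) (hpxy : p • (x + y) ∈ S) : x ∉ S ⊔ R ∙ (x + y) := by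
  intro h
  obtain ⟨s, hs, _, hz, hxs⟩ := Submodule.mem_sup.1 h
  obtain ⟨c, rfl⟩ := Submodule.mem_span_singleton.1 hz
  rcases hres c with ⟨d, rfl⟩ | ⟨d, hd⟩
  · apply hx
    rw [← hxs, mul_comm, mul_smul]
    exact S.add_mem hs (S.smul_mem d hpxy)
  · apply hy
    convert S.neg_mem (S.add_mem hs (S.smul_mem d hpxy)) using 1
    rw [sub_eq_iff_eq_add.1 hd] at hxs
    linear_combination (norm := module) hxs

theorem pow_smul_generator_notMem_pow_smul [IsDomain R] (hp : Prime p) (hj : t j = n + 1)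
    (K : Submodule R (PrimaryModule p t)) : p ^ n • generator p t j ∉ p ^ (n + 1) • K := by
  rintro ⟨z, -, hz⟩
  have h0 : p ^ (n + 1) • z j = 0 := by
    obtain ⟨a, ha⟩ := Ideal.Quotient.mk_surjective (z j)
    rw [← ha]
    exact mk_eq_zero_iff_dvd.2 (hj ▸ dvd_mul_right _ _)
  have hzj := congrFun hz j
  rw [smul_generator_apply_self] at hzj
  have := mk_eq_zero_iff_dvd.1 (hzj.symm.trans h0)
  rw [pow_dvd_pow_iff hp.ne_zero hp.not_isUnit, hj] at this
  omega

theorem pow_smul_generator_notMem_pow_smul_ulmSubmodule [IsDomain R] (hp : Prime p)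
    (hj : t j = n + 1) (hmn : m ≤ n) :
    p ^ m • generator p t j ∉ p ^ m • ulmSubmodule (PrimaryModule p t) p n := by
  rintro ⟨z, hz, hzu⟩
  refine generator_notMem_ulmSubmodule hp hj (((ulmSubmodule _ p n).sub_mem_iff_left hz).1 ?_)
  refine torsionBy_le_ulmSubmodule hmn ?_
  rw [Submodule.mem_torsionBy_iff, smul_sub, sub_eq_zero]
  exact hzu.symm

end Ulm

theorem exists_isCharacteristicSubmodule_not_isFullyInvariant {ι : Type*} [Finite ι] [IsDomain R]
    {p : R} (hp : Prime p) (hres : ∀ c : R, p ∣ c ∨ p ∣ c - 1) {t : ι → ℕ} {m n : ℕ} {i j : ι}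
    (hi : ∀ k, t k = m + 1 ↔ k = i) (hj : ∀ k, t k = n + 1 ↔ k = j) (hmn : m + 1 < n) :
    ∃ N : Submodule R (PrimaryModule p t), IsCharacteristicSubmodule N ∧ ¬ N.IsFullyInvariant := by
  classical
  have hti := (hi i).2 rfl
  have htj := (hj j).2 rfl
  set S := p ^ (m + 1) • ulmSubmodule (PrimaryModule p t) p n
  set x := p ^ m • generator p t i
  set y := p ^ (m + 1) • generator p t j
  have hx : x ∉ S := pow_smul_generator_notMem_pow_smul hp hti _
  have hy : y ∉ S := pow_smul_generator_notMem_pow_smul_ulmSubmodule hp htj hmn.le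
  have hpx : p • x = 0 := by
    rw [smul_smul, ← pow_succ']
    exact generator_mem_torsionBy hti
  have hpy : p • y ∈ S := by
    rw [smul_comm]
    exact Submodule.smul_mem_pointwise_smul _ _ _
      (smul_mem_ulmSubmodule (generator_mem_torsionBy htj))
  refine ⟨S ⊔ R ∙ (x + y), .sup_span_singleton ?_ fun g hg ↦ ?_, fun hfull ↦ ?_⟩
  · exact isCharacteristicSubmodule_of_isFullyInvariant
      (isFullyInvariant_smul isFullyInvariant_ulmSubmodule _)
  · have hgx : g x - x ∈ S := by
      rw [map_smul, ← smul_sub]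
      exact pow_smul_mem_of_mem_ulmSubmodule hmn
        (apply_generator_sub_mem_ulmSubmodule hp hres hi hg)
    have hgy : g y - y ∈ S := by
      rw [map_smul, ← smul_sub]
      exact Submodule.smul_mem_pointwise_smul _ _ _
        (apply_generator_sub_mem_ulmSubmodule hp hres hj hg)
    rw [map_add, add_sub_add_comm]
    exact S.add_mem hgx hgy
  · refine notMem_sup_span_add hres hx hy (by rwa [smul_add, hpx, zero_add]) ?_
    have hij : i ≠ j := by rintro rfl; omega
    let π : End R (PrimaryModule p t) := LinearMap.single R _ i ∘ₗ LinearMap.proj i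
    have hπ : π (x + y) = x := by
      ext k
      obtain rfl | hk := eq_or_ne k i
      · simp [π, x, y, generator_apply_of_ne hij]
      · simp [π, x, hk, generator_apply_of_ne hk]
    have := hfull π (Submodule.mem_sup_right (Submodule.mem_span_singleton_self (x + y)))
    rwa [Submodule.mem_comap, hπ] at this

theorem exists_isCharacteristicSubmodule_not_isFullyInvariant_iff {ι : Type*} [Finite ι]
    [IsDomain R] {p : R} (hp : p ≠ 0) (hmax : (Ideal.span {p}).IsMaximal) {t : ι → ℕ} :
    (∃ N : Submodule R (PrimaryModule p t), IsCharacteristicSubmodule N ∧ ¬ N.IsFullyInvariant) ↔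
      (∀ c : R, p ∣ c ∨ p ∣ c - 1) ∧
        ∃ r s, 0 < r ∧ r + 1 < s ∧ (∃! i, t i = s) ∧ ∃! i, t i = r := by
  classical
  constructor
  · rintro ⟨N, hN, hnot⟩
    obtain ⟨y, hy, i, hi⟩ : ∃ y ∈ N, ∃ i, Pi.single i (y i) ∉ N := by
      contrapose! hnot
      exact hN.isFullyInvariant_of_single_mem hnot
    refine ⟨fun c ↦ ?_, ?_⟩
    · by_contra! hc
      exact hi (hN.single_mem_of_not_dvd hmax hc.1 hc.2 hy)
    · obtain ⟨j, k, hjk, hj, hk⟩ := hN.exists_gap_of_single_notMem hmax hy hi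
      exact ⟨t j, t k, pos_of_single_notMem hj, hjk,
        hN.existsUnique_of_single_notMem hy hk, hN.existsUnique_of_single_notMem hy hj⟩
  · rintro ⟨hres, r, s, hr, hrs, ⟨j, hj, hj'⟩, i, hi, hi'⟩
    obtain ⟨m, rfl⟩ := Nat.exists_eq_add_of_lt hr
    obtain ⟨n, rfl⟩ := Nat.exists_eq_add_of_lt (hr.trans (Nat.lt_of_succ_lt hrs))
    rw [zero_add] at *
    exact exists_isCharacteristicSubmodule_not_isFullyInvariant
      ((Ideal.span_singleton_prime hp).1 hmax.isPrime) hres (fun k ↦ ⟨hi' k, fun h ↦ h ▸ hi⟩)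
      (fun k ↦ ⟨hj' k, fun h ↦ h ▸ hj⟩) (by omega)

theorem exists_injective_range_eq_torsionBy [IsDomain R] {p : R} (hp : p ≠ 0) (k n : ℕ) :
    ∃ φ : (R ⧸ Ideal.span {p ^ min k n}) →ₗ[R] R ⧸ Ideal.span {p ^ n},
      Function.Injective φ ∧ LinearMap.range φ = Submodule.torsionBy R _ (p ^ k) := by
  have hpow : p ^ (n - k) * p ^ min k n = p ^ n := by rw [← pow_add]; congr 1; omega
  have hdvd {a : R} : p ^ n ∣ p ^ (n - k) * a ↔ p ^ min k n ∣ a := by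
    rw [← hpow, mul_dvd_mul_iff_left (pow_ne_zero _ hp)]
  let φ : (R ⧸ Ideal.span {p ^ min k n}) →ₗ[R] R ⧸ Ideal.span {p ^ n} :=
    Submodule.mapQ _ _ (LinearMap.mulLeft R (p ^ (n - k))) <| by
      rw [Ideal.span_singleton_le_iff_mem]
      exact Ideal.mem_span_singleton.2 hpow.symm.dvd
  refine ⟨φ, (injective_iff_map_eq_zero φ).2 fun x hx ↦ ?_, le_antisymm ?_ fun x hx ↦ ?_⟩
  · obtain ⟨a, rfl⟩ := Ideal.Quotient.mk_surjective x
    exact mk_eq_zero_iff_dvd.2 (hdvd.1 (mk_eq_zero_iff_dvd.1 hx))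
  · rintro _ ⟨x, rfl⟩
    obtain ⟨a, rfl⟩ := Ideal.Quotient.mk_surjective x
    refine mk_eq_zero_iff_dvd.2 ?_
    change p ^ n ∣ p ^ k * (p ^ (n - k) * a)
    rw [← mul_assoc, ← pow_add]
    exact (pow_dvd_pow p (by omega)).mul_right a
  · obtain ⟨a, rfl⟩ := Ideal.Quotient.mk_surjective x
    obtain ⟨b, rfl⟩ : p ^ (n - k) ∣ a := by
      rcases le_total k n with hkn | hnk
      · rw [← mul_dvd_mul_iff_left (pow_ne_zero k hp), ← pow_add, Nat.add_sub_cancel' hkn]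
        exact mk_eq_zero_iff_dvd.1 hx
      · rw [Nat.sub_eq_zero_of_le hnk, pow_zero]
        exact one_dvd a
    exact ⟨Ideal.Quotient.mk _ b, rfl⟩

theorem exists_injective_range_eq_torsionBy_primaryModule [IsDomain R] {ι : Type*} {p : R}
    (hp : p ≠ 0) (k : ℕ) (t : ι → ℕ) :
    ∃ φ : PrimaryModule p (fun i ↦ min k (t i)) →ₗ[R] PrimaryModule p t,
      Function.Injective φ ∧ LinearMap.range φ = Submodule.torsionBy R _ (p ^ k) := by
  choose φ hφ hrange using fun i ↦ exists_injective_range_eq_torsionBy hp k (t i)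
  refine ⟨LinearMap.piMap φ, Function.Injective.piMap hφ, ?_⟩
  ext x
  have (i : ι) : x i ∈ LinearMap.range (φ i) ↔ p ^ k • x i = 0 := by
    rw [hrange]; exact Submodule.mem_torsionBy_iff _ _
  simp only [LinearMap.mem_range, Submodule.mem_torsionBy_iff, funext_iff] at this ⊢
  exact ⟨fun ⟨y, hy⟩ i ↦ (this i).1 ⟨y i, hy i⟩, fun h ↦ by
    choose y hy using fun i ↦ (this i).2 (h i)
    exact ⟨y, hy⟩⟩

end CommRing

section Operator

variable {F V : Type*} [Field F] [AddCommGroup V] [Module F V] {f : End F V}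

/-- The operator on `V` underlying an endomorphism of the `F[X]`-module on which `X` acts as `f`. -/
noncomputable def operatorOfAEval (h : End F[X] (AEval' f)) : End F V :=
  (AEval'.of f).symm.conj (h.restrictScalars F)

theorem operatorOfAEval_apply (h : End F[X] (AEval' f)) (v : V) :
    operatorOfAEval h v = (AEval'.of f).symm (h (AEval'.of f v)) :=
  rfl

theorem commute_operatorOfAEval (h : End F[X] (AEval' f)) : Commute (operatorOfAEval h) f := by
  refine LinearMap.ext fun v ↦ ?_
  simp only [End.mul_apply, operatorOfAEval_apply]
  rw [← AEval'.X_smul_of, map_smul, AEval'.of_symm_X_smul]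

theorem exists_operatorOfAEval_eq {g : End F V} (hg : Commute g f) :
    ∃ h : End F[X] (AEval' f), operatorOfAEval h = g :=
  ⟨LinearMap.ofAEval f ((AEval'.of f).toLinearMap ∘ₗ g) fun v ↦
    (congrArg (AEval'.of f) (LinearMap.congr_fun hg v)).trans (AEval'.X_smul_of f (g v)).symm, rfl⟩

theorem isUnit_operatorOfAEval_iff {h : End F[X] (AEval' f)} :
    IsUnit (operatorOfAEval h) ↔ IsUnit h := by
  rw [End.isUnit_iff, End.isUnit_iff]
  rfl

theorem forall_commute_iff {P : End F V → Prop} :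
    (∀ g, Commute g f → P g) ↔ ∀ h : End F[X] (AEval' f), P (operatorOfAEval h) :=
  ⟨fun H h ↦ H _ (commute_operatorOfAEval h), fun H g hg ↦ by
    obtain ⟨h, rfl⟩ := exists_operatorOfAEval_eq hg
    exact H h⟩

theorem hyperinvariantSubspace_iff {N : Submodule F[X] (AEval' f)} :
    HyperinvariantSubspace f ((AEval.mapSubmodule F V f).symm N : Submodule F V) ↔
      N.IsFullyInvariant :=
  forall_commute_iff

theorem characteristicSubspace_iff {N : Submodule F[X] (AEval' f)} :
    CharacteristicSubspace f ((AEval.mapSubmodule F V f).symm N : Submodule F V) ↔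
      IsCharacteristicSubmodule N := by
  have hinv : ∀ x ∈ ((AEval.mapSubmodule F V f).symm N : Submodule F V),
      f x ∈ ((AEval.mapSubmodule F V f).symm N : Submodule F V) :=
    ((AEval.mapSubmodule F V f).symm N).2
  rw [CharacteristicSubspace, and_iff_right hinv]
  refine (forall_congr' fun _ ↦ forall_comm).trans (forall_commute_iff.trans ?_)
  exact forall_congr' fun _ ↦ imp_congr isUnit_operatorOfAEval_iff Iff.rfl

theorem exists_characteristicSubspace_not_hyperinvariantSubspace_iff :
    (∃ Y : Submodule F V, CharacteristicSubspace f Y ∧ ¬ HyperinvariantSubspace f Y) ↔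
      ∃ N : Submodule F[X] (AEval' f), IsCharacteristicSubmodule N ∧ ¬ N.IsFullyInvariant := by
  simp_rw [← characteristicSubspace_iff, ← hyperinvariantSubspace_iff]
  refine ⟨fun ⟨Y, hY⟩ ↦ ?_, fun ⟨N, hN⟩ ↦ ⟨_, hN⟩⟩
  refine ⟨AEval.mapSubmodule F V f ⟨Y, hY.1.1⟩, ?_⟩
  rwa [OrderIso.symm_apply_apply]

theorem exists_linearEquiv_primaryModule [FiniteDimensional F V] (hf : IsNilpotent f) :
    ∃ (d : ℕ) (t : Fin d → ℕ), Nonempty (AEval' f ≃ₗ[F[X]] PrimaryModule (X : F[X]) t) := by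
  obtain ⟨n, hn⟩ := hf
  have htor : IsTorsion' (AEval' f) (Submonoid.powers (X : F[X])) := by
    intro x
    obtain ⟨v, rfl⟩ := (AEval'.of f).surjective x
    refine ⟨⟨X ^ n, n, rfl⟩, (AEval'.X_pow_smul_of f v n).trans ?_⟩
    rw [hn, zero_smul, map_zero]
  obtain ⟨d, t, ⟨e⟩⟩ := torsion_by_prime_power_decomposition irreducible_X htor
  exact ⟨d, t, ⟨e.trans (DirectSum.linearEquivFunOnFintype F[X] (Fin d) _)⟩⟩

theorem map_ker_pow {M : Type*} [AddCommGroup M] [Module F M] [Module F[X] M]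
    [IsScalarTower F F[X] M] (e : AEval' f ≃ₗ[F[X]] M) (k : ℕ) :
    (LinearMap.ker (f ^ k)).map (AEval'.of f ≪≫ₗ e.restrictScalars F : V →ₗ[F] M) =
      (Submodule.torsionBy F[X] M (X ^ k)).restrictScalars F := by
  ext x
  obtain ⟨v, rfl⟩ := (AEval'.of f ≪≫ₗ e.restrictScalars F).surjective x
  have h : (X ^ k : F[X]) • e (AEval'.of f v) = e (AEval'.of f ((f ^ k) v)) := by
    rw [← map_smul, AEval'.X_pow_smul_of, End.smul_def]
  simp [h]

theorem finrank_primaryModule_X {ι : Type*} [Fintype ι] (t : ι → ℕ) :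
    finrank F (PrimaryModule (X : F[X]) t) = ∑ i, t i := by
  have (i : ι) : Module.Finite F (F[X] ⧸ Ideal.span {(X : F[X]) ^ t i}) :=
    (monic_X_pow (t i)).finite_quotient
  rw [finrank_pi_fintype]
  refine Finset.sum_congr rfl fun i _ ↦ ?_
  rw [finrank_quotient_span_eq_natDegree, natDegree_X_pow]

variable {ι : Type*} {t : ι → ℕ}

theorem finrank_ker_pow [Fintype ι] (e : AEval' f ≃ₗ[F[X]] PrimaryModule (X : F[X]) t) (k : ℕ) :
    finrank F (LinearMap.ker (f ^ k)) = ∑ i, min k (t i) := by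
  obtain ⟨φ, hφ, hrange⟩ := exists_injective_range_eq_torsionBy_primaryModule
    (X_ne_zero (R := F)) k t
  rw [← LinearEquiv.finrank_map_eq (AEval'.of f ≪≫ₗ e.restrictScalars F), map_ker_pow,
    ← hrange, ← finrank_primaryModule_X (F := F)]
  exact LinearMap.finrank_range_of_inj (f := φ.restrictScalars F) hφ

theorem two_mul_sum_min [Fintype ι] {k : ℕ} (hk : 0 < k) :
    2 * ∑ i, min k (t i) =
      ∑ i, min (k - 1) (t i) + ∑ i, min (k + 1) (t i) + Nat.card {i // t i = k} := by
  rw [Nat.card_eq_fintype_card, Fintype.card_subtype, Finset.card_filter, Finset.mul_sum,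
    ← Finset.sum_add_distrib, ← Finset.sum_add_distrib]
  refine Finset.sum_congr rfl fun i _ ↦ ?_
  split_ifs <;> omega

theorem two_mul_finrank_ker_pow_eq_iff [Finite ι]
    (e : AEval' f ≃ₗ[F[X]] PrimaryModule (X : F[X]) t) {k : ℕ} (hk : 0 < k) :
    2 * finrank F (LinearMap.ker (f ^ k)) = finrank F (LinearMap.ker (f ^ (k - 1))) +
      finrank F (LinearMap.ker (f ^ (k + 1))) + 1 ↔ ∃! i, t i = k := by
  have := Fintype.ofFinite ι
  rw [finrank_ker_pow e, finrank_ker_pow e, finrank_ker_pow e, two_mul_sum_min hk,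
    Nat.add_left_cancel_iff, Nat.card_eq_fintype_card, Fintype.card_eq_one_iff_nonempty_unique,
    unique_subtype_iff_existsUnique]

end Operator

theorem forall_X_dvd_or_X_dvd_sub_one_iff {F : Type*} [Field F] :
    (∀ c : F[X], X ∣ c ∨ X ∣ c - 1) ↔ Nat.card F = 2 := by
  simp only [X_dvd_iff, coeff_sub, coeff_one_zero, sub_eq_zero]
  rw [Nat.card_eq_two_iff' (0 : F)]
  refine ⟨fun h ↦ ⟨1, one_ne_zero, fun a ha ↦ ?_⟩, fun h c ↦ ?_⟩
  · simpa [ha] using h (C a)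
  · exact or_iff_not_imp_left.2 fun hc ↦ h.unique hc one_ne_zero

theorem shoda_characterization_general {F V : Type*} [Field F] [AddCommGroup V] [Module F V]
    [FiniteDimensional F V] (f : End F V) (hf : IsNilpotent f) :
    (∃ Y : Submodule F V, CharacteristicSubspace f Y ∧ ¬ HyperinvariantSubspace f Y) ↔
      Nat.card F = 2 ∧ ∃ r s : ℕ, 0 < r ∧ r + 1 < s ∧
        (2 * finrank F (LinearMap.ker (f ^ s)) = finrank F (LinearMap.ker (f ^ (s - 1))) +
          finrank F (LinearMap.ker (f ^ (s + 1))) + 1) ∧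
        (2 * finrank F (LinearMap.ker (f ^ r)) = finrank F (LinearMap.ker (f ^ (r - 1))) +
          finrank F (LinearMap.ker (f ^ (r + 1))) + 1) := by
  obtain ⟨d, t, ⟨e⟩⟩ := exists_linearEquiv_primaryModule hf
  have hmax : (Ideal.span {(X : F[X])}).IsMaximal :=
    PrincipalIdealRing.isMaximal_of_irreducible irreducible_X
  rw [exists_characteristicSubspace_not_hyperinvariantSubspace_iff,
    exists_isCharacteristicSubmodule_congr e,
    exists_isCharacteristicSubmodule_not_isFullyInvariant_iff X_ne_zero hmax,
    forall_X_dvd_or_X_dvd_sub_one_iff]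
  refine and_congr_right fun _ ↦ exists₂_congr fun r s ↦
    and_congr_right fun hr ↦ and_congr_right fun hrs ↦ ?_
  rw [two_mul_finrank_ker_pow_eq_iff e hr, two_mul_finrank_ker_pow_eq_iff e (by omega)]

/-- Shoda: For a nilpotent operator `f` on a finite-dimensional vector space
over `GF(2)`, there exists a characteristic non-hyperinvariant subspace iff for some
`r, s` with `s > r + 1` the Jordan form of `f` has exactly one block of size `s` and
exactly one block of size `r` (block counts expressed via kernel dimensions). -/
theorem shoda_characterization
    {V : Type*} [AddCommGroup V] [Module (ZMod 2) V] [FiniteDimensional (ZMod 2) V]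
    (f : Module.End (ZMod 2) V) (hf : IsNilpotent f) :
    (∃ Y : Submodule (ZMod 2) V,
        CharacteristicSubspace f Y ∧ ¬ HyperinvariantSubspace f Y) ↔
      ∃ r s : ℕ, 0 < r ∧ r + 1 < s ∧
        (2 * Module.finrank (ZMod 2) (LinearMap.ker (f ^ s)) =
          Module.finrank (ZMod 2) (LinearMap.ker (f ^ (s - 1))) +
          Module.finrank (ZMod 2) (LinearMap.ker (f ^ (s + 1))) + 1) ∧
        (2 * Module.finrank (ZMod 2) (LinearMap.ker (f ^ r)) =
          Module.finrank (ZMod 2) (LinearMap.ker (f ^ (r - 1))) +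
          Module.finrank (ZMod 2) (LinearMap.ker (f ^ (r + 1))) + 1) := by
  rw [shoda_characterization_general f hf, Nat.card_zmod, and_iff_right rfl]
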